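/- arXiv:1710.01157 — 2 statements merged into one kernel-verified Lean document; each statement's English description precedes it below -/
import Mathlib

section
/- Let W = (G, m) be a finite weighted graph with a centre vertex v₀ and cycle edges A(v₀) ⊆ E_{v₀} (i.e., G − A(v₀) is a tree). Set δ = ρ(v₀) − ∑_{e ∈ A(v₀)} m_e / m((v₀)_e) − m(A(v₀))/m(v₀), where ρ(v₀) = m(E_{v₀})/m(v₀). Then the Lebesgue measure of the magnetic spectral gaps set MS^W = [0, 2ρ_∞] \ ⋃_α σ(Δ_α^W) is at least δ. In particular, if δ > 0, then MS^W ≠ ∅. -/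
open Matrix BigOperators

/-- Sum of edge weights over edges incident to `v` (loops counted twice). -/
noncomputable def edgeSumAt {V E : Type*} [Fintype E] [DecidableEq V] (src tgt : E → V)
    (mE : E → ℝ) (v : V) : ℝ :=
  ∑ e : E, ((if src e = v then mE e else 0) + (if tgt e = v then mE e else 0))

/-- Relative weight `ρ(v) = m(E_v)/m(v)`. -/
noncomputable def rho {V E : Type*} [Fintype E] [DecidableEq V] (src tgt : E → V)
    (m : V → ℝ) (mE : E → ℝ) (v : V) : ℝ :=
  edgeSumAt src tgt mE v / m v

/-- Matrix of the discrete magnetic Laplacian (in the orthonormal basis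
`m(v)^{-1/2} 1_v` of `ℓ²(V,m)`), with unimodular phases `z e` on the edges. -/
noncomputable def dmlPhase {V E : Type*} [Fintype E] [DecidableEq V] (src tgt : E → V)
    (m : V → ℝ) (mE : E → ℝ) (z : E → ℂ) : Matrix V V ℂ :=
  fun u v =>
    (if u = v then ((rho src tgt m mE u : ℝ) : ℂ) else 0) -
      ((1 / (Real.sqrt (m u) * Real.sqrt (m v)) : ℝ) : ℂ) *
        ∑ e : E, (mE e : ℂ) *
          ((if src e = v ∧ tgt e = u then z e else 0) +
           (if tgt e = v ∧ src e = u then starRingEnd ℂ (z e) else 0))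

/-- Discrete magnetic Laplacian with vector potential `α : E → ℝ`. -/
noncomputable def dml {V E : Type*} [Fintype E] [DecidableEq V] (src tgt : E → V)
    (m : V → ℝ) (mE : E → ℝ) (α : E → ℝ) : Matrix V V ℂ :=
  dmlPhase src tgt m mE (fun e => Complex.exp ((α e : ℂ) * Complex.I))

/-- Real spectrum of a complex matrix. -/
noncomputable def realSpec {V : Type*} [Fintype V] [DecidableEq V] (M : Matrix V V ℂ) : Set ℝ :=
  {x : ℝ | (x : ℂ) ∈ spectrum ℂ M}

/-- Degree of a vertex in the multigraph (loops counted twice). -/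
def mdeg {V E : Type*} [Fintype E] [DecidableEq V] (src tgt : E → V) (v : V) : ℕ :=
  ∑ e : E, ((if src e = v then 1 else 0) + (if tgt e = v then 1 else 0))

/-- Simple graph underlying the multigraph restricted to the edge set `S`. -/
def multiGraph {V E : Type*} (src tgt : E → V) (S : Set E) : SimpleGraph V :=
  SimpleGraph.fromRel (fun u v => ∃ e ∈ S, src e = u ∧ tgt e = v)

/-- `G − A` is a tree: connected with `|E \ A| = |V| − 1`. -/
def isTreeAfter {V E : Type*} [Fintype V] [Fintype E] [DecidableEq E] (src tgt : E → V)
    (A : Finset E) : Prop :=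
  (multiGraph src tgt {e | e ∉ A}).Connected ∧
    (Finset.univ.filter (fun e => e ∉ A)).card = Fintype.card V - 1

/-- Magnetic spectral gaps set `[0, 2ρ_∞] \ ⋃_α σ(Δ_α)`. -/
noncomputable def msSet {V E : Type*} [Fintype V] [Fintype E] [DecidableEq V] [Nonempty V]
    (src tgt : E → V) (m : V → ℝ) (mE : E → ℝ) : Set ℝ :=
  Set.Icc 0 (2 * Finset.univ.sup' Finset.univ_nonempty (rho src tgt m mE)) \
    ⋃ (α : E → ℝ), realSpec (dml src tgt m mE α)

theorem aux_form_eq {n : ℕ} {F : Type*} [NormedAddCommGroup F] [InnerProductSpace ℂ F]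
    [FiniteDimensional ℂ F] {T : F →ₗ[ℂ] F} (hT : T.IsSymmetric)
    (hn : Module.finrank ℂ F = n) (x : F) :
    (inner ℂ x (T x)).re =
      ∑ j, hT.eigenvalues hn j * ‖(hT.eigenvectorBasis hn).repr x j‖ ^ 2 := by
  rw [← (hT.eigenvectorBasis hn).repr.inner_map_map, PiLp.inner_apply, Complex.re_sum]
  refine Finset.sum_congr rfl fun j _ => ?_
  rw [hT.eigenvectorBasis_apply_self_apply hn, ← Complex.normSq_eq_norm_sq, Complex.normSq_apply]
  simp [Complex.mul_re, Complex.mul_im]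
  ring

theorem aux_norm_eq {n : ℕ} {F : Type*} [NormedAddCommGroup F] [InnerProductSpace ℂ F]
    [FiniteDimensional ℂ F] {T : F →ₗ[ℂ] F} (hT : T.IsSymmetric)
    (hn : Module.finrank ℂ F = n) (x : F) :
    ‖x‖ ^ 2 = ∑ j, ‖(hT.eigenvectorBasis hn).repr x j‖ ^ 2 := by
  rw [← (hT.eigenvectorBasis hn).repr.norm_map, EuclideanSpace.norm_sq_eq]

theorem aux_minmax {n p : ℕ} {F F' : Type*} [NormedAddCommGroup F] [InnerProductSpace ℂ F]
    [FiniteDimensional ℂ F] [NormedAddCommGroup F'] [InnerProductSpace ℂ F']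
    [FiniteDimensional ℂ F'] {T : F →ₗ[ℂ] F} {S : F' →ₗ[ℂ] F'} (hT : T.IsSymmetric)
    (hS : S.IsSymmetric)
    (hn : Module.finrank ℂ F = n) (hp : Module.finrank ℂ F' = p)
    (J : F' →ₗ[ℂ] F) (hJ : ∀ x, ‖J x‖ ^ 2 = ‖x‖ ^ 2)
    (hform : ∀ x, (inner ℂ (J x) (T (J x))).re ≤ (inner ℂ x (S x)).re)
    (i : Fin n) (k : Fin p) (hik : n + k.1 ≤ p + i.1) :
    hT.eigenvalues hn i ≤ hS.eigenvalues hp k := by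
  let Φ : F' →ₗ[ℂ] ({j : Fin p // j < k} → ℂ) × ({j : Fin n // i < j} → ℂ) :=
    LinearMap.prod
      (LinearMap.pi fun j => ((hS.eigenvectorBasis hp).toBasis.coord j.1))
      (LinearMap.pi fun j => ((hT.eigenvectorBasis hn).toBasis.coord j.1) ∘ₗ J)
  have hlt : Module.finrank ℂ (({j : Fin p // j < k} → ℂ) × ({j : Fin n // i < j} → ℂ))
      < Module.finrank ℂ F' := by
    rw [Module.finrank_prod, Module.finrank_fintype_fun_eq_card,
      Module.finrank_fintype_fun_eq_card, hp, Fintype.card_subtype, Fintype.card_subtype]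
    have h1 : (Finset.univ.filter fun j : Fin p => j < k) = Finset.Iio k := by ext; simp
    have h2 : (Finset.univ.filter fun j : Fin n => i < j) = Finset.Ioi i := by ext; simp
    rw [h1, h2, Fin.card_Iio, Fin.card_Ioi]
    omega
  have hker := LinearMap.ker_ne_bot_of_finrank_lt (f := Φ) hlt
  obtain ⟨x, hx, hx0⟩ := (Submodule.ne_bot_iff _).1 hker
  rw [LinearMap.mem_ker] at hx
  have hxS : ∀ j, j < k → (hS.eigenvectorBasis hp).repr x j = 0 := by
    intro j hj
    have := congrFun (congrArg Prod.fst hx) ⟨j, hj⟩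
    simpa [Φ] using this
  have hxT : ∀ j, i < j → (hT.eigenvectorBasis hn).repr (J x) j = 0 := by
    intro j hj
    have := congrFun (congrArg Prod.snd hx) ⟨j, hj⟩
    simpa [Φ] using this
  have hpos : 0 < ‖x‖ ^ 2 := by positivity
  have hlow : hT.eigenvalues hn i * ‖x‖ ^ 2 ≤ (inner ℂ (J x) (T (J x))).re := by
    rw [← hJ x, aux_norm_eq hT hn, aux_form_eq hT hn, Finset.mul_sum]
    refine Finset.sum_le_sum fun j _ => ?_
    by_cases h : i < j
    · simp [hxT j h]
    · exact mul_le_mul_of_nonneg_right (hT.eigenvalues_antitone hn (not_lt.1 h)) (by positivity)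
  have hup : (inner ℂ x (S x)).re ≤ hS.eigenvalues hp k * ‖x‖ ^ 2 := by
    rw [aux_norm_eq hS hp, aux_form_eq hS hp, Finset.mul_sum]
    refine Finset.sum_le_sum fun j _ => ?_
    by_cases h : j < k
    · simp [hxS j h]
    · exact mul_le_mul_of_nonneg_right (hS.eigenvalues_antitone hp (not_lt.1 h)) (by positivity)
  have := hlow.trans ((hform x).trans hup)
  exact le_of_mul_le_mul_right this hpos

theorem aux_eig_bound {n : ℕ} {F : Type*} [NormedAddCommGroup F] [InnerProductSpace ℂ F]
    [FiniteDimensional ℂ F] {T : F →ₗ[ℂ] F} (hT : T.IsSymmetric)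
    (hn : Module.finrank ℂ F = n) (i : Fin n) :
    ∃ x : F, ‖x‖ = 1 ∧ hT.eigenvalues hn i = (inner ℂ x (T x)).re := by
  refine ⟨hT.eigenvectorBasis hn i, (hT.eigenvectorBasis hn).orthonormal.1 i, ?_⟩
  rw [hT.apply_eigenvectorBasis, inner_smul_right, inner_self_eq_norm_sq_to_K,
    (hT.eigenvectorBasis hn).orthonormal.1 i]
  simp

theorem aux_eig_last {n : ℕ} {F : Type*} [NormedAddCommGroup F] [InnerProductSpace ℂ F]
    [FiniteDimensional ℂ F] {T : F →ₗ[ℂ] F} (hT : T.IsSymmetric)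
    (hn : Module.finrank ℂ F = n + 1) (x : F) (hx : x ≠ 0) (h : (inner ℂ x (T x)).re = 0) :
    hT.eigenvalues hn (Fin.last n) ≤ 0 := by
  have hlow : hT.eigenvalues hn (Fin.last n) * ‖x‖ ^ 2 ≤ (inner ℂ x (T x)).re := by
    rw [aux_norm_eq hT hn, aux_form_eq hT hn, Finset.mul_sum]
    refine Finset.sum_le_sum fun j _ => ?_
    exact mul_le_mul_of_nonneg_right (hT.eigenvalues_antitone hn (Fin.le_last j)) (by positivity)
  rw [h] at hlow
  have hpos : 0 < ‖x‖ ^ 2 := by positivity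
  by_contra hc
  push Not at hc
  have := mul_pos hc hpos
  linarith

/-- tree potentials -/
theorem aux_potential {V E : Type*} [Fintype V] [Fintype E] [DecidableEq V] [DecidableEq E]
    (src tgt : E → V) (A : Finset E) (htree : isTreeAfter src tgt A) (α : E → ℝ) :
    ∃ φ : V → ℝ, ∀ e, e ∉ A → α e = φ (tgt e) - φ (src e) := by
  obtain ⟨hconn, hcard⟩ := htree
  let d : (V → ℝ) →ₗ[ℝ] ({e // e ∉ A} → ℝ) :=
    LinearMap.pi fun e => (LinearMap.proj (R := ℝ) (φ := fun _ : V => ℝ) (tgt e.1)) -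
      (LinearMap.proj (R := ℝ) (φ := fun _ : V => ℝ) (src e.1))
  have hd : ∀ f e, d f e = f (tgt e.1) - f (src e.1) := fun f e => by simp [d]
  obtain ⟨v₁⟩ := hconn.nonempty
  have hker : LinearMap.ker d ≤ Submodule.span ℝ {(fun _ => 1 : V → ℝ)} := by
    intro f hf
    rw [LinearMap.mem_ker] at hf
    have hadj : ∀ u v, (multiGraph src tgt {e | e ∉ A}).Adj u v → f u = f v := by
      intro u v huv
      rw [multiGraph, SimpleGraph.fromRel_adj] at huv
      obtain ⟨-, ⟨e, he, rfl, rfl⟩ | ⟨e, he, rfl, rfl⟩⟩ := huv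
      · have := congrFun hf ⟨e, he⟩
        rw [hd] at this; simp at this; linarith
      · have := congrFun hf ⟨e, he⟩
        rw [hd] at this; simp at this; linarith
    have hreach : ∀ u v, f u = f v := by
      intro u v
      obtain ⟨w⟩ := hconn.preconnected u v
      induction w with
      | nil => rfl
      | cons h _ ih => exact (hadj _ _ h).trans ih
    rw [Submodule.mem_span_singleton]
    refine ⟨f v₁, ?_⟩
    ext v
    simp [hreach v v₁]
  have hk1 : Module.finrank ℝ (LinearMap.ker d) ≤ 1 :=
    (Submodule.finrank_mono hker).trans (finrank_span_singleton (fun h => by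
      simpa using congrFun h v₁)).le
  have hrn := LinearMap.finrank_range_add_finrank_ker d
  rw [Module.finrank_fintype_fun_eq_card] at hrn
  have hE : Module.finrank ℝ ({e // e ∉ A} → ℝ) = Fintype.card V - 1 := by
    rw [Module.finrank_fintype_fun_eq_card, Fintype.card_subtype, hcard]
  have hle := Submodule.finrank_le (LinearMap.range d)
  have hV : 0 < Fintype.card V := Fintype.card_pos_iff.2 ⟨v₁⟩
  have htop : LinearMap.range d = ⊤ := by
    apply Submodule.eq_top_of_finrank_eq
    omega
  obtain ⟨φ, hφ⟩ := LinearMap.range_eq_top.1 htop (fun e => α e.1)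
  refine ⟨φ, fun e he => ?_⟩
  have := congrFun hφ ⟨e, he⟩
  rw [hd] at this
  exact this.symm

theorem aux_herm {V E : Type*} [Fintype V] [Fintype E] [DecidableEq V] (src tgt : E → V)
    (m : V → ℝ) (mE : E → ℝ) (α : E → ℝ) : (dml src tgt m mE α).IsHermitian := by
  ext u v
  simp only [Matrix.conjTranspose_apply, dml, dmlPhase, star_sub, star_mul', star_sum, star_add,
    RCLike.star_def, apply_ite (starRingEnd ℂ), Complex.conj_ofReal, map_zero, Complex.conj_conj]
  congr 1
  · by_cases h : u = v
    · subst h; simp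
    · simp [h, Ne.symm h]
  · rw [mul_comm (Real.sqrt (m v))]
    congr 1
    refine Finset.sum_congr rfl fun e _ => ?_
    rw [add_comm]
    simp only [and_comm]

theorem aux_form {V E : Type*} [Fintype V] [Fintype E] [DecidableEq V] (src tgt : E → V)
    (m : V → ℝ) (mE : E → ℝ) (hm : ∀ v, 0 < m v) (α : E → ℝ) (x : V → ℂ) :
    (∑ u, (∑ v, dml src tgt m mE α u v * x v) * starRingEnd ℂ (x u)).re =
      ∑ e, mE e * Complex.normSq (Complex.exp ((α e : ℂ) * Complex.I) *
        (x (src e) / (Real.sqrt (m (src e)) : ℝ)) - x (tgt e) / (Real.sqrt (m (tgt e)) : ℝ)) := by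
  set z : E → ℂ := fun e => Complex.exp ((α e : ℂ) * Complex.I) with hz
  have hz1 : ∀ e, z e * starRingEnd ℂ (z e) = 1 := by
    intro e
    rw [Complex.mul_conj, Complex.normSq_eq_norm_sq, hz]
    simp [Complex.norm_exp_ofReal_mul_I]
  set g : V → ℂ := fun v => x v / (Real.sqrt (m v) : ℝ) with hg
  have hs : ∀ v, ((Real.sqrt (m v) : ℝ) : ℂ) ≠ 0 := fun v =>
    Complex.ofReal_ne_zero.2 (Real.sqrt_pos.2 (hm v)).ne'
  have hx : ∀ v, x v = (Real.sqrt (m v) : ℝ) * g v := by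
    intro v; rw [hg]; field_simp [hs v]
  have hmm : ∀ v, ((m v : ℝ) : ℂ) = ((Real.sqrt (m v) : ℝ) : ℂ) * (Real.sqrt (m v) : ℝ) := by
    intro v; rw [← Complex.ofReal_mul, Real.mul_self_sqrt (hm v).le]
  suffices h : (∑ u, (∑ v, dml src tgt m mE α u v * x v) * starRingEnd ℂ (x u)) =
      ((∑ e, mE e * Complex.normSq (z e * g (src e) - g (tgt e)) : ℝ) : ℂ) by
    rw [h, Complex.ofReal_re]
  have hentry : ∀ u v, dml src tgt m mE α u v * x v * starRingEnd ℂ (x u) =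
      ∑ e, (mE e : ℂ) * ((if u = v then (if src e = u then g v * starRingEnd ℂ (g u) else 0) else 0)
        + (if u = v then (if tgt e = u then g v * starRingEnd ℂ (g u) else 0) else 0)
        - (if src e = v then (if tgt e = u then z e * g v * starRingEnd ℂ (g u) else 0) else 0)
        - (if tgt e = v then (if src e = u then starRingEnd ℂ (z e) * g v * starRingEnd ℂ (g u)
            else 0) else 0)) := by
    intro u v
    have h1 : (if u = v then ((rho src tgt m mE u : ℝ) : ℂ) else 0) * x v * starRingEnd ℂ (x u) =
        ∑ e, (mE e : ℂ) *
          ((if u = v then (if src e = u then g v * starRingEnd ℂ (g u) else 0) else 0)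
        + (if u = v then (if tgt e = u then g v * starRingEnd ℂ (g u) else 0) else 0)) := by
      by_cases h : u = v
      · subst h
        simp only [if_true, rho, edgeSumAt, Complex.ofReal_div, hmm u, hx u, map_mul,
          Complex.conj_ofReal, Complex.ofReal_sum]
        rw [div_mul_eq_mul_div, div_mul_eq_mul_div, div_eq_iff (mul_ne_zero (hs u) (hs u)),
          Finset.sum_mul, Finset.sum_mul, Finset.sum_mul]
        refine Finset.sum_congr rfl fun e _ => ?_
        split_ifs <;> simp <;> ring
      · simp [h]
    have h2 : (((1 / (Real.sqrt (m u) * Real.sqrt (m v)) : ℝ) : ℂ) *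
        ∑ e : E, (mE e : ℂ) *
          ((if src e = v ∧ tgt e = u then z e else 0) +
           (if tgt e = v ∧ src e = u then starRingEnd ℂ (z e) else 0))) * x v * starRingEnd ℂ (x u) =
        ∑ e, (mE e : ℂ) *
        ((if src e = v then (if tgt e = u then z e * g v * starRingEnd ℂ (g u) else 0) else 0)
        + (if tgt e = v then (if src e = u then starRingEnd ℂ (z e) * g v * starRingEnd ℂ (g u)
            else 0) else 0)) := by
      rw [Finset.mul_sum, Finset.sum_mul, Finset.sum_mul]
      refine Finset.sum_congr rfl fun e _ => ?_
      have hc : ((1 / (Real.sqrt (m u) * Real.sqrt (m v)) : ℝ) : ℂ) * x v * starRingEnd ℂ (x u)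
          = g v * starRingEnd ℂ (g u) := by
        rw [hx v, hx u, map_mul, Complex.conj_ofReal]
        push_cast
        field_simp [hs u, hs v]
      simp only [ite_and]
      calc _ = (((1 / (Real.sqrt (m u) * Real.sqrt (m v)) : ℝ) : ℂ) * x v * starRingEnd ℂ (x u)) *
            ((mE e : ℂ) * ((if src e = v then if tgt e = u then z e else 0 else 0) +
              if tgt e = v then if src e = u then starRingEnd ℂ (z e) else 0 else 0)) := by ring
        _ = _ := by
          rw [hc]
          split_ifs <;> ring
    simp only [dml, dmlPhase, sub_mul]
    rw [h1]
    rw [h2, ← Finset.sum_sub_distrib]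
    refine Finset.sum_congr rfl fun e _ => ?_
    ring
  simp only [Finset.sum_mul, hentry]
  have : ∀ u, (∑ v, ∑ e, (mE e : ℂ) *
      ((if u = v then (if src e = u then g v * starRingEnd ℂ (g u) else 0) else 0)
        + (if u = v then (if tgt e = u then g v * starRingEnd ℂ (g u) else 0) else 0)
        - (if src e = v then (if tgt e = u then z e * g v * starRingEnd ℂ (g u) else 0) else 0)
        - (if tgt e = v then (if src e = u then starRingEnd ℂ (z e) * g v * starRingEnd ℂ (g u)
            else 0) else 0))) =
      ∑ e, (mE e : ℂ) * ((if src e = u then g u * starRingEnd ℂ (g u) else 0)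
        + (if tgt e = u then g u * starRingEnd ℂ (g u) else 0)
        - (if tgt e = u then z e * g (src e) * starRingEnd ℂ (g u) else 0)
        - (if src e = u then starRingEnd ℂ (z e) * g (tgt e) * starRingEnd ℂ (g u) else 0)) := by
    intro u
    rw [Finset.sum_comm]
    refine Finset.sum_congr rfl fun e _ => ?_
    rw [← Finset.mul_sum]
    simp only [Finset.sum_add_distrib, Finset.sum_sub_distrib, Finset.sum_ite_eq, Finset.mem_univ,
      if_true]
  simp only [this]
  rw [Finset.sum_comm, Complex.ofReal_sum]
  refine Finset.sum_congr rfl fun e _ => ?_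
  rw [← Finset.mul_sum]
  simp only [Finset.sum_add_distrib, Finset.sum_sub_distrib, Finset.sum_ite_eq, Finset.mem_univ,
      if_true]
  rw [Complex.ofReal_mul, ← Complex.mul_conj]
  congr 1
  simp only [map_sub, map_mul]
  linear_combination (- g (src e) * starRingEnd ℂ (g (src e))) * hz1 e

theorem aux_inner {V : Type*} [Fintype V] [DecidableEq V] (M : Matrix V V ℂ)
    (x : EuclideanSpace ℂ V) : inner ℂ x (Matrix.toEuclideanLin M x) =
      ∑ u, (∑ v, M u v * x v) * starRingEnd ℂ (x u) := by
  rw [PiLp.inner_apply]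
  simp [RCLike.inner_apply, Matrix.mulVec, dotProduct]

theorem aux_trace {V : Type*} [Fintype V] [DecidableEq V] {n : ℕ} (M : Matrix V V ℂ)
    (hT : (Matrix.toEuclideanLin M).IsSymmetric)
    (hn : Module.finrank ℂ (EuclideanSpace ℂ V) = n) :
    ∑ i, hT.eigenvalues hn i = ∑ v, (M v v).re := by
  have h := hT.re_trace_eq_sum_eigenvalues hn
  have h2 : LinearMap.trace ℂ _ (Matrix.toEuclideanLin M) = M.trace := by
    rw [Matrix.toEuclideanLin_eq_toLin_orthonormal, Matrix.trace_toLin_eq]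
  rw [← h, h2]
  simp [Matrix.trace]

theorem aux_diag {V E : Type*} [Fintype V] [Fintype E] [DecidableEq V] (src tgt : E → V)
    (m : V → ℝ) (mE : E → ℝ) (α : E → ℝ) (v : V)
    (h : ∀ e, mE e ≠ 0 → ¬ (src e = v ∧ tgt e = v)) :
    (dml src tgt m mE α v v).re = rho src tgt m mE v := by
  have h0 : ∑ e : E, (mE e : ℂ) *
          ((if src e = v ∧ tgt e = v then Complex.exp ((α e : ℂ) * Complex.I) else 0) +
           (if tgt e = v ∧ src e = v then
            starRingEnd ℂ (Complex.exp ((α e : ℂ) * Complex.I)) else 0)) = 0 := by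
    refine Finset.sum_eq_zero fun e _ => ?_
    by_cases h1 : mE e = 0
    · simp [h1]
    · have h2 := h e h1
      rw [if_neg h2, if_neg (fun h => h2 h.symm)]; simp
  simp only [dml, dmlPhase]
  rw [h0]
  simp

/-- multiplication by phases -/
noncomputable def auxPhase {V : Type*} [Fintype V] (φ : V → ℝ) :
    EuclideanSpace ℂ V →ₗ[ℂ] EuclideanSpace ℂ V where
  toFun x := WithLp.toLp 2 fun v => Complex.exp ((φ v : ℂ) * Complex.I) * x v
  map_add' x y := by ext v; simp [mul_add]
  map_smul' c x := by ext v; simp [mul_left_comm]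

theorem auxPhase_norm {V : Type*} [Fintype V] (φ : V → ℝ) (x : EuclideanSpace ℂ V) :
    ‖auxPhase φ x‖ ^ 2 = ‖x‖ ^ 2 := by
  rw [EuclideanSpace.norm_sq_eq, EuclideanSpace.norm_sq_eq]
  refine Finset.sum_congr rfl fun v _ => ?_
  simp [auxPhase, Complex.norm_exp_ofReal_mul_I]

/-- extension by zero -/
noncomputable def auxExt {V : Type*} [Fintype V] [DecidableEq V] (v₀ : V) :
    EuclideanSpace ℂ {v // v ≠ v₀} →ₗ[ℂ] EuclideanSpace ℂ V where
  toFun x := WithLp.toLp 2 fun v => if h : v ≠ v₀ then x ⟨v, h⟩ else 0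
  map_add' x y := by ext v; by_cases h : v = v₀ <;> simp [h]
  map_smul' c x := by ext v; by_cases h : v = v₀ <;> simp [h]

theorem auxExt_self {V : Type*} [Fintype V] [DecidableEq V] (v₀ : V)
    (x : EuclideanSpace ℂ {v // v ≠ v₀}) : auxExt v₀ x v₀ = 0 := by
  simp [auxExt]

theorem auxExt_coe {V : Type*} [Fintype V] [DecidableEq V] (v₀ : V)
    (x : EuclideanSpace ℂ {v // v ≠ v₀}) (v : {v // v ≠ v₀}) : auxExt v₀ x v.1 = x v := by
  simp [auxExt, v.2]

theorem aux_sum_ne {V M : Type*} [Fintype V] [DecidableEq V] [AddCommMonoid M] (v₀ : V)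
    (f : V → M) : ∑ v, f v = f v₀ + ∑ v : {v // v ≠ v₀}, f v.1 := by
  rw [← Fintype.sum_subtype_add_sum_subtype (fun v => v = v₀) f]
  congr 1
  convert! Fintype.sum_subsingleton (fun v : {v // v = v₀} => f v.1) ⟨v₀, rfl⟩

theorem auxExt_norm {V : Type*} [Fintype V] [DecidableEq V] (v₀ : V)
    (x : EuclideanSpace ℂ {v // v ≠ v₀}) : ‖auxExt v₀ x‖ ^ 2 = ‖x‖ ^ 2 := by
  rw [EuclideanSpace.norm_sq_eq, EuclideanSpace.norm_sq_eq, aux_sum_ne v₀]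
  simp [auxExt_self, auxExt_coe]

theorem auxExt_inner {V : Type*} [Fintype V] [DecidableEq V] (v₀ : V) (M : Matrix V V ℂ)
    (x : EuclideanSpace ℂ {v // v ≠ v₀}) :
    inner ℂ x (Matrix.toEuclideanLin (M.submatrix Subtype.val Subtype.val) x) =
      inner ℂ (auxExt v₀ x) (Matrix.toEuclideanLin M (auxExt v₀ x)) := by
  rw [aux_inner, aux_inner, aux_sum_ne v₀]
  simp [auxExt_self, auxExt_coe, aux_sum_ne v₀]

/-- the quadratic form -/
theorem aux_form' {V E : Type*} [Fintype V] [Fintype E] [DecidableEq V] (src tgt : E → V)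
    (m : V → ℝ) (mE : E → ℝ) (hm : ∀ v, 0 < m v) (α : E → ℝ) (x : EuclideanSpace ℂ V) :
    (inner ℂ x (Matrix.toEuclideanLin (dml src tgt m mE α) x)).re =
      ∑ e, mE e * ‖Complex.exp ((α e : ℂ) * Complex.I) *
        (x (src e) / (Real.sqrt (m (src e)) : ℝ)) -
          x (tgt e) / (Real.sqrt (m (tgt e)) : ℝ)‖ ^ 2 := by
  rw [aux_inner, aux_form src tgt m mE hm]
  simp only [Complex.normSq_eq_norm_sq]

theorem aux_upper {V E : Type*} [Fintype V] [Fintype E] [DecidableEq V] [Nonempty V]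
    (src tgt : E → V)
    (m : V → ℝ) (mE mE' : E → ℝ) (hm : ∀ v, 0 < m v) (hmE : ∀ e, 0 ≤ mE' e)
    (hle : ∀ e, mE' e ≤ mE e) (α : E → ℝ) (x : EuclideanSpace ℂ V) :
    (inner ℂ x (Matrix.toEuclideanLin (dml src tgt m mE' α) x)).re ≤
      (2 * Finset.univ.sup' Finset.univ_nonempty (rho src tgt m mE)) * ‖x‖ ^ 2 := by
  have key : ∀ v, ‖x v / (Real.sqrt (m v) : ℝ)‖ ^ 2 = ‖x v‖ ^ 2 / m v := by
    intro v
    rw [norm_div, div_pow, Complex.norm_real, Real.norm_eq_abs, sq_abs, Real.sq_sqrt (hm v).le]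
  rw [aux_form' src tgt m mE' hm]
  calc _ ≤ ∑ e, mE e * (2 * (‖x (src e)‖ ^ 2 / m (src e) + ‖x (tgt e)‖ ^ 2 / m (tgt e))) := by
        refine Finset.sum_le_sum fun e _ => ?_
        refine mul_le_mul (hle e) ?_ (by positivity) ((hmE e).trans (hle e))
        rw [← key, ← key]
        set a := x (src e) / (Real.sqrt (m (src e)) : ℝ)
        set b := x (tgt e) / (Real.sqrt (m (tgt e)) : ℝ)
        have h1 := norm_sub_le (Complex.exp ((α e : ℂ) * Complex.I) * a) b
        rw [norm_mul, Complex.norm_exp_ofReal_mul_I, one_mul] at h1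
        have h2 := norm_nonneg (Complex.exp ((α e : ℂ) * Complex.I) * a - b)
        nlinarith [sq_nonneg (‖a‖ - ‖b‖)]
    _ = ∑ v, 2 * (rho src tgt m mE v * ‖x v‖ ^ 2) := by
        have : ∀ v, 2 * (rho src tgt m mE v * ‖x v‖ ^ 2) = ∑ e,
            ((if src e = v then mE e * (2 * (‖x v‖ ^ 2 / m v)) else 0) +
              (if tgt e = v then mE e * (2 * (‖x v‖ ^ 2 / m v)) else 0)) := by
          intro v
          rw [rho, edgeSumAt, Finset.sum_div, Finset.sum_mul, Finset.mul_sum]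
          refine Finset.sum_congr rfl fun e _ => ?_
          split_ifs <;> ring
        simp only [this]
        rw [Finset.sum_comm]
        refine Finset.sum_congr rfl fun e _ => ?_
        rw [Finset.sum_add_distrib]
        simp only [Finset.sum_ite_eq, Finset.mem_univ, if_true]
        ring
    _ ≤ _ := by
        rw [EuclideanSpace.norm_sq_eq, Finset.mul_sum]
        refine Finset.sum_le_sum fun v _ => ?_
        rw [← mul_assoc]
        refine mul_le_mul_of_nonneg_right ?_ (by positivity)
        have := Finset.le_sup' (rho src tgt m mE) (Finset.mem_univ v)
        linarith

theorem aux_delta {V E : Type*} [Fintype V] [Fintype E] [DecidableEq V] [DecidableEq E]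
    (src tgt : E → V) (m : V → ℝ) (mE : E → ℝ)
    (v₀ : V) (A : Finset E)
    (hA : ∀ e ∈ A, src e = v₀ ∨ tgt e = v₀) :
    ∑ v, rho src tgt m (fun e => if e ∈ A then 0 else mE e) v -
      ∑ v : {v // v ≠ v₀}, rho src tgt m mE v.1 =
      (rho src tgt m mE v₀ -
          (∑ e ∈ A, mE e / m (if src e = v₀ then tgt e else src e)) -
          (∑ e ∈ A, mE e) / m v₀) := by
  have h1 : ∀ f : E → ℝ, ∑ v, rho src tgt m f v =
      ∑ e, (f e / m (src e) + f e / m (tgt e)) := by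
    intro f
    simp only [rho, edgeSumAt, Finset.sum_div]
    rw [Finset.sum_comm]
    refine Finset.sum_congr rfl fun e _ => ?_
    simp only [add_div, ite_div, zero_div, Finset.sum_add_distrib]
    simp
  have h2 := aux_sum_ne v₀ (rho src tgt m mE)
  have h3 : ∑ v, rho src tgt m mE v - ∑ v, rho src tgt m (fun e => if e ∈ A then 0 else mE e) v =
      (∑ e ∈ A, mE e / m (if src e = v₀ then tgt e else src e)) + (∑ e ∈ A, mE e) / m v₀ := by
    rw [h1, h1, ← Finset.sum_sub_distrib, Finset.sum_div, ← Finset.sum_add_distrib,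
      ← Finset.sum_filter_add_sum_filter_not Finset.univ (fun e => e ∈ A)]
    have : ∑ e ∈ Finset.univ.filter (fun e => e ∉ A), ((mE e / m (src e) + mE e / m (tgt e)) -
        ((if e ∈ A then 0 else mE e) / m (src e) + (if e ∈ A then 0 else mE e) / m (tgt e))) = 0 := by
      refine Finset.sum_eq_zero fun e he => ?_
      rw [if_neg (Finset.mem_filter.1 he).2]; ring
    rw [this, add_zero, Finset.filter_mem_eq_inter, Finset.univ_inter]
    refine Finset.sum_congr rfl fun e he => ?_
    rw [if_pos he]
    by_cases hs : src e = v₀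
    · simp [hs]; ring
    · have ht := (hA e he).resolve_left hs
      simp [hs, ht]
  linarith

theorem aux_measure {N : ℕ} (a : Fin (N + 1) → ℝ) (b : Fin N → ℝ) (S : Set ℝ)
    (ha : Antitone a) (hab : ∀ i, a i.succ ≤ b i)
    (hS : ∀ i, Set.Ioo (b i) (a i.castSucc) ⊆ S) (δ : ℝ)
    (hδ : δ ≤ ∑ i, (a i.castSucc - b i)) :
    ENNReal.ofReal δ ≤ MeasureTheory.volume S := by
  have hdisj : Pairwise (Function.onFun Disjoint fun i : Fin N => Set.Ioo (b i) (a i.castSucc)) := by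
    have hlt : ∀ i j : Fin N, i < j →
        Disjoint (Set.Ioo (b i) (a i.castSucc)) (Set.Ioo (b j) (a j.castSucc)) := by
      intro i j hij
      rw [Set.disjoint_left]
      rintro x ⟨h1, -⟩ ⟨-, h2⟩
      have h3 : a j.castSucc ≤ a i.succ := ha (by
        rw [Fin.le_def]; simp only [Fin.val_succ, Fin.val_castSucc]; omega)
      have := hab i
      linarith
    intro i j hij
    rcases lt_or_gt_of_ne hij with h | h
    · exact hlt i j h
    · exact (hlt j i h).symm
  calc ENNReal.ofReal δ ≤ ENNReal.ofReal (∑ i, max (a i.castSucc - b i) 0) :=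
        ENNReal.ofReal_le_ofReal (hδ.trans (Finset.sum_le_sum fun i _ => le_max_left _ _))
    _ = ∑ i, ENNReal.ofReal (max (a i.castSucc - b i) 0) :=
        ENNReal.ofReal_sum_of_nonneg fun i _ => le_max_right _ _
    _ = ∑ i, MeasureTheory.volume (Set.Ioo (b i) (a i.castSucc)) := by
        refine Finset.sum_congr rfl fun i _ => ?_
        rw [Real.volume_Ioo]
        rcases le_total (a i.castSucc - b i) 0 with h | h
        · rw [max_eq_right h, ENNReal.ofReal_zero, ENNReal.ofReal_of_nonpos h]
        · rw [max_eq_left h]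
    _ = MeasureTheory.volume (⋃ i, Set.Ioo (b i) (a i.castSucc)) := by
        rw [MeasureTheory.measure_iUnion hdisj (fun i => measurableSet_Ioo), tsum_fintype]
    _ ≤ _ := MeasureTheory.measure_mono (Set.iUnion_subset hS)

/-- Let `v₀` be a centre vertex of the finite weighted graph `(G,m)`
with cycle edges `A ⊆ E_{v₀}` (so that `G − A` is a tree), and set
`δ = ρ(v₀) − ∑_{e∈A} m_e/m((v₀)_e) − m(A)/m(v₀)`. Then the Lebesgue measure of the
magnetic spectral gaps set is at least `δ`; in particular, if `δ > 0` the magnetic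
spectral gaps set is nonempty. -/
theorem stmt7 {V E : Type*} [Fintype V] [Fintype E] [DecidableEq V] [DecidableEq E]
    [Nonempty V] (src tgt : E → V) (m : V → ℝ) (mE : E → ℝ)
    (hm : ∀ v, 0 < m v) (hmE : ∀ e, 0 < mE e)
    (v₀ : V) (A : Finset E)
    (hA : ∀ e ∈ A, src e = v₀ ∨ tgt e = v₀)
    (htree : isTreeAfter src tgt A) :
    ENNReal.ofReal
        (rho src tgt m mE v₀ -
          (∑ e ∈ A, mE e / m (if src e = v₀ then tgt e else src e)) -
          (∑ e ∈ A, mE e) / m v₀) ≤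
      MeasureTheory.volume (msSet src tgt m mE) := by
  obtain ⟨N, hN⟩ : ∃ N, Fintype.card V = N + 1 :=
    ⟨Fintype.card V - 1, (Nat.sub_add_cancel Fintype.card_pos).symm⟩
  have hn : Module.finrank ℂ (EuclideanSpace ℂ V) = N + 1 := by rw [finrank_euclideanSpace, hN]
  have hp : Module.finrank ℂ (EuclideanSpace ℂ {v // v ≠ v₀}) = N := by
    rw [finrank_euclideanSpace, Fintype.card_subtype_compl, hN]; simp
  have hnoloop : ∀ e, e ∉ A → src e ≠ tgt e := by
    intro e he h
    obtain ⟨φ, hφ⟩ := aux_potential src tgt A htree (fun _ => 1)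
    have := hφ e he
    rw [h] at this; simp at this
  set mE' : E → ℝ := fun e => if e ∈ A then 0 else mE e with hmE'
  have hmE'0 : ∀ e, 0 ≤ mE' e := by
    intro e; simp only [hmE']; split_ifs
    · exact le_rfl
    · exact (hmE e).le
  have hmE'le : ∀ e, mE' e ≤ mE e := by
    intro e; simp only [hmE']; split_ifs
    · exact (hmE e).le
    · exact le_rfl
  have hsym : ∀ f α, (Matrix.toEuclideanLin (dml src tgt m f α)).IsSymmetric := fun f α =>
    Matrix.isSymmetric_toEuclideanLin_iff.2 (aux_herm src tgt m f α)
  have hsymB : (Matrix.toEuclideanLin ((dml src tgt m mE (fun _ => 0)).submatrix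
      (Subtype.val : {v // v ≠ v₀} → V) Subtype.val)).IsSymmetric :=
    Matrix.isSymmetric_toEuclideanLin_iff.2 ((aux_herm src tgt m mE _).submatrix _)
  have hlow : ∀ α i, (hsym mE' (fun _ => 0)).eigenvalues hn i ≤ (hsym mE α).eigenvalues hn i := by
    intro α i
    obtain ⟨φ, hφ⟩ := aux_potential src tgt A htree α
    refine aux_minmax _ _ hn hn (auxPhase fun v => -φ v) (auxPhase_norm _) ?_ i i le_rfl
    intro x
    rw [aux_form' src tgt m mE' hm, aux_form' src tgt m mE hm]
    refine Finset.sum_le_sum fun e _ => ?_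
    by_cases he : e ∈ A
    · simp only [hmE', he, if_true, zero_mul]
      exact mul_nonneg (hmE e).le (by positivity)
    · simp only [hmE', he, if_false]
      apply le_of_eq
      congr 2
      rw [hφ e he]
      have hu : ‖Complex.exp (((-φ (tgt e) : ℝ) : ℂ) * Complex.I)‖ = 1 :=
        Complex.norm_exp_ofReal_mul_I _
      rw [← one_mul ‖Complex.exp (((φ (tgt e) - φ (src e) : ℝ) : ℂ) * Complex.I) * _ - _‖, ← hu,
        ← norm_mul, mul_sub, ← mul_assoc, ← Complex.exp_add]
      congr 1
      simp only [auxPhase, LinearMap.coe_mk, AddHom.coe_mk]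
      rw [show ((-φ (tgt e) : ℝ) : ℂ) * Complex.I + ((φ (tgt e) - φ (src e) : ℝ) : ℂ) * Complex.I =
        ((-φ (src e) : ℝ) : ℂ) * Complex.I by push_cast; ring]
      simp only [Complex.ofReal_zero, zero_mul, Complex.exp_zero, one_mul]
      ring
  have hupp : ∀ α (i : Fin N), (hsym mE α).eigenvalues hn i.succ ≤ hsymB.eigenvalues hp i := by
    intro α i
    obtain ⟨φ, hφ⟩ := aux_potential src tgt A htree α
    refine aux_minmax _ _ hn hp (auxPhase φ ∘ₗ auxExt v₀)
      (fun x => by rw [LinearMap.comp_apply, auxPhase_norm, auxExt_norm]) ?_ _ _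
      (by simp only [Fin.val_succ]; omega)
    intro x
    rw [auxExt_inner, LinearMap.comp_apply]
    generalize hy : auxExt v₀ x = y
    have hy0 : y v₀ = 0 := by rw [← hy, auxExt_self]
    rw [aux_form' src tgt m mE hm, aux_form' src tgt m mE hm]
    refine Finset.sum_le_sum fun e _ => ?_
    apply le_of_eq
    congr 2
    simp only [auxPhase, LinearMap.coe_mk, AddHom.coe_mk]
    by_cases he : e ∈ A
    · rcases hA e he with h | h
      · simp [h, hy0, Complex.norm_exp_ofReal_mul_I]
      · simp [h, hy0, Complex.norm_exp_ofReal_mul_I]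
    · rw [hφ e he]
      have hu : ‖Complex.exp (((φ (tgt e) : ℝ) : ℂ) * Complex.I)‖ = 1 :=
        Complex.norm_exp_ofReal_mul_I _
      rw [← one_mul ‖Complex.exp (((0 : ℝ) : ℂ) * Complex.I) * _ - _‖, ← hu, ← norm_mul, mul_sub]
      congr 1
      rw [mul_div_assoc, mul_div_assoc, ← mul_assoc, ← Complex.exp_add]
      rw [show ((φ (tgt e) - φ (src e) : ℝ) : ℂ) * Complex.I + ((φ (src e) : ℝ) : ℂ) * Complex.I =
        ((φ (tgt e) : ℝ) : ℂ) * Complex.I by push_cast; ring]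
      simp only [Complex.ofReal_zero, zero_mul, Complex.exp_zero, one_mul]
  refine aux_measure ((hsym mE' (fun _ => 0)).eigenvalues hn) (hsymB.eigenvalues hp) _
    ((hsym mE' (fun _ => 0)).eigenvalues_antitone hn)
    (fun i => (hlow (fun _ => 0) _).trans (hupp (fun _ => 0) i)) ?_ _ ?_
  · rintro i x ⟨hx1, hx2⟩
    refine ⟨⟨?_, ?_⟩, ?_⟩
    · refine le_trans ?_ hx1.le
      obtain ⟨y, -, hy⟩ := aux_eig_bound hsymB hp i
      rw [hy, auxExt_inner, aux_form' src tgt m mE hm]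
      exact Finset.sum_nonneg fun e _ => mul_nonneg (hmE e).le (by positivity)
    · refine le_trans hx2.le ?_
      obtain ⟨y, hy1, hy⟩ := aux_eig_bound (hsym mE' (fun _ => 0)) hn i.castSucc
      rw [hy]
      refine (aux_upper src tgt m mE mE' hm hmE'0 hmE'le _ y).trans (le_of_eq ?_)
      rw [hy1]; ring
    · rw [Set.mem_iUnion]
      rintro ⟨α, hα⟩
      rw [realSpec, Set.mem_setOf_eq, ← Matrix.spectrum_toEuclideanLin,
        ← Module.End.hasEigenvalue_iff_mem_spectrum] at hα
      obtain ⟨j, hj⟩ := (hsym mE α).exists_eigenvalues_eq hn hα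
      have hj' : (hsym mE α).eigenvalues hn j = x := Complex.ofReal_injective hj
      rcases le_or_gt j i.castSucc with h | h
      · have h1 := (hsym mE α).eigenvalues_antitone hn h
        have h2 := hlow α i.castSucc
        linarith
      · have h0 : i.succ ≤ j := by
          rw [Fin.le_def, Fin.val_succ]
          rw [Fin.lt_def, Fin.val_castSucc] at h
          omega
        have h1 := (hsym mE α).eigenvalues_antitone hn h0
        have h2 := hupp α i
        linarith
  · have hlast : (hsym mE' (fun _ => 0)).eigenvalues hn (Fin.last N) ≤ 0 := by
      refine aux_eig_last _ hn (WithLp.toLp 2 fun v => ((Real.sqrt (m v) : ℝ) : ℂ)) ?_ ?_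
      · intro h
        have := congrFun (congrArg WithLp.ofLp h) v₀
        simp only [WithLp.ofLp_zero, Pi.zero_apply, Complex.ofReal_eq_zero] at this
        exact (Real.sqrt_pos.2 (hm v₀)).ne' this
      · rw [aux_form' src tgt m mE' hm]
        refine Finset.sum_eq_zero fun e _ => ?_
        have hs : ∀ v, ((Real.sqrt (m v) : ℝ) : ℂ) ≠ 0 := fun v =>
          Complex.ofReal_ne_zero.2 (Real.sqrt_pos.2 (hm v)).ne'
        simp [div_self (hs _)]
    have ht1 := aux_trace _ (hsym mE' (fun _ => 0)) hn
    have ht2 := aux_trace _ hsymB hp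
    have hd1 : ∑ v, (dml src tgt m mE' (fun _ => 0) v v).re = ∑ v, rho src tgt m mE' v := by
      refine Finset.sum_congr rfl fun v _ => aux_diag src tgt m mE' _ v ?_
      rintro e he ⟨h1, h2⟩
      by_cases h : e ∈ A
      · exact he (by simp [hmE', h])
      · exact hnoloop e h (h1.trans h2.symm)
    have hd2 : ∑ v : {v // v ≠ v₀}, ((dml src tgt m mE (fun _ => 0)).submatrix
        (Subtype.val : {v // v ≠ v₀} → V) Subtype.val v v).re =
        ∑ v : {v // v ≠ v₀}, rho src tgt m mE v.1 := by
      refine Finset.sum_congr rfl fun v _ => aux_diag src tgt m mE _ v.1 ?_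
      rintro e - ⟨h1, h2⟩
      by_cases h : e ∈ A
      · rcases hA e h with h3 | h3
        · exact v.2 (h1.symm.trans h3)
        · exact v.2 (h2.symm.trans h3)
      · exact hnoloop e h (h1.trans h2.symm)
    rw [hd1, Fin.sum_univ_castSucc] at ht1
    rw [hd2] at ht2
    rw [← aux_delta src tgt m mE v₀ A hA, Finset.sum_sub_distrib]
    linarith
end

section
/- Let W = (G, m) be a finite connected weighted graph with standard weights and Betti number 1. If G has a vertex of degree 1, then there exists a centre vertex v₀ with a single cycle edge e₁ such that 1 − 1/deg((v₀)_{e₁}) − 1/deg(v₀) ≥ 1/6 > 0; consequently the magnetic spectral gaps set MS^G is nonempty. -/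
open Matrix BigOperators

section

open scoped ComplexOrder

lemma quad_form_eq {n : Type*} [Fintype n] [DecidableEq n] {A : Matrix n n ℂ}
    (hA : A.IsHermitian) (x : n → ℂ) :
    (star x ⬝ᵥ (A *ᵥ x)).re =
      ∑ i, hA.eigenvalues i * ‖(star (hA.eigenvectorUnitary : Matrix n n ℂ) *ᵥ x) i‖ ^ 2 := by
  conv_lhs => rw [hA.spectral_theorem]
  rw [Unitary.conjStarAlgAut_apply]
  rw [← Matrix.mulVec_mulVec, ← Matrix.mulVec_mulVec, Matrix.dotProduct_mulVec]
  rw [show star x ᵥ* (hA.eigenvectorUnitary : Matrix n n ℂ) =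
      star (star (hA.eigenvectorUnitary : Matrix n n ℂ) *ᵥ x) by
    rw [Matrix.star_mulVec]; simp [Matrix.star_eq_conjTranspose]]
  generalize (star (hA.eigenvectorUnitary : Matrix n n ℂ) *ᵥ x) = y
  simp only [dotProduct, Matrix.mulVec_diagonal, Complex.re_sum]
  refine Finset.sum_congr rfl fun i _ => ?_
  simp [← Complex.normSq_eq_norm_sq, Complex.normSq_apply]
  ring

lemma norm_form_eq {n : Type*} [Fintype n] [DecidableEq n] {A : Matrix n n ℂ}
    (hA : A.IsHermitian) (x : n → ℂ) :
    ∑ i, ‖(star (hA.eigenvectorUnitary : Matrix n n ℂ) *ᵥ x) i‖ ^ 2 = ∑ i, ‖x i‖ ^ 2 := by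
  have key : ∀ y : n → ℂ, ((∑ i, ‖y i‖ ^ 2 : ℝ) : ℂ) = star y ⬝ᵥ y := by
    intro y
    simp only [dotProduct, Complex.ofReal_sum]
    refine Finset.sum_congr rfl fun i _ => ?_
    simp [Complex.conj_mul']
  apply Complex.ofReal_injective
  rw [key, key, Matrix.star_mulVec, ← Matrix.dotProduct_mulVec, Matrix.mulVec_mulVec]
  simp [Matrix.star_eq_conjTranspose]
  rw [← Matrix.star_eq_conjTranspose,
    Unitary.mul_star_self_of_mem hA.eigenvectorUnitary.2]
  simp

lemma weyl_mono {n : Type*} [Fintype n] [DecidableEq n] {A B : Matrix n n ℂ}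
    (hA : A.IsHermitian) (hB : B.IsHermitian) (h : (B - A).PosSemidef) (k : n) :
    hA.eigenvalues k ≤ hB.eigenvalues k := by
  set idx : n → Fin (Fintype.card n) :=
    fun i => (Fintype.equivOfCardEq (Fintype.card_fin (Fintype.card n))).symm i with hidx
  have hinj : Function.Injective idx := Equiv.injective _
  have mA : ∀ i j, idx i ≤ idx j → hA.eigenvalues j ≤ hA.eigenvalues i :=
    fun i j hij => hA.eigenvalues₀_antitone hij
  have mB : ∀ i j, idx i ≤ idx j → hB.eigenvalues j ≤ hB.eigenvalues i :=
    fun i j hij => hB.eigenvalues₀_antitone hij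
  let TA := Matrix.mulVecLin (star (hA.eigenvectorUnitary : Matrix n n ℂ))
  let TB := Matrix.mulVecLin (star (hB.eigenvectorUnitary : Matrix n n ℂ))
  let T : (n → ℂ) →ₗ[ℂ] (n → ℂ) := LinearMap.pi fun i =>
    if idx i < idx k then (LinearMap.proj i).comp TB
    else if idx k < idx i then (LinearMap.proj i).comp TA else 0
  have hns : ¬ Function.Surjective T := by
    intro hs
    obtain ⟨x, hx⟩ := hs (Pi.single k 1)
    have := congrFun hx k
    simp [T] at this
  have hni : ¬ Function.Injective T := fun hi => hns (LinearMap.surjective_of_injective hi)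
  obtain ⟨x, hx0, hxT⟩ : ∃ x, x ≠ 0 ∧ T x = 0 := by
    by_contra hcon
    push Not at hcon
    exact hni ((injective_iff_map_eq_zero T).2 fun a ha => by
      by_contra h0; exact hcon a h0 ha)
  have hTB : ∀ i, idx i < idx k →
      (star (hB.eigenvectorUnitary : Matrix n n ℂ) *ᵥ x) i = 0 := by
    intro i hi
    have := congrFun hxT i
    simpa [T, hi, TB] using this
  have hTA : ∀ i, idx k < idx i →
      (star (hA.eigenvectorUnitary : Matrix n n ℂ) *ᵥ x) i = 0 := by
    intro i hi
    have := congrFun hxT i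
    simpa [T, hi, hi.not_gt, TA] using this
  have hpos : 0 < ∑ i, ‖x i‖ ^ 2 := by
    obtain ⟨j, hj⟩ := Function.ne_iff.1 hx0
    refine Finset.sum_pos' (fun i _ => by positivity) ⟨j, Finset.mem_univ _, ?_⟩
    have : 0 < ‖x j‖ := norm_pos_iff.2 hj
    positivity
  have h1 : hA.eigenvalues k * ∑ i, ‖x i‖ ^ 2 ≤ (star x ⬝ᵥ (A *ᵥ x)).re := by
    rw [quad_form_eq hA, ← norm_form_eq hA, Finset.mul_sum]
    refine Finset.sum_le_sum fun i _ => ?_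
    rcases lt_or_ge (idx k) (idx i) with hi | hi
    · simp [hTA i hi]
    · exact mul_le_mul_of_nonneg_right (mA i k hi) (by positivity)
  have h2 : (star x ⬝ᵥ (B *ᵥ x)).re ≤ hB.eigenvalues k * ∑ i, ‖x i‖ ^ 2 := by
    rw [quad_form_eq hB, ← norm_form_eq hB, Finset.mul_sum]
    refine Finset.sum_le_sum fun i _ => ?_
    rcases lt_or_ge (idx i) (idx k) with hi | hi
    · simp [hTB i hi]
    · exact mul_le_mul_of_nonneg_right (mB k i hi) (by positivity)
  have h3 : (star x ⬝ᵥ (A *ᵥ x)).re ≤ (star x ⬝ᵥ (B *ᵥ x)).re := by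
    have := (Complex.le_def.1 (h.dotProduct_mulVec_nonneg x)).1
    rw [Matrix.sub_mulVec, dotProduct_sub] at this
    simpa using this
  exact le_of_mul_le_mul_right (h1.trans (h3.trans h2)) hpos

/-- Bracketing: a family of spectra sandwiched between two Hermitian matrices with small
trace difference cannot cover an interval of length 2. -/
lemma bracket {n : Type*} [Fintype n] [DecidableEq n] {A B : Matrix n n ℂ}
    (hA : A.IsHermitian) (hB : B.IsHermitian) (S : Set ℝ)
    (hS : ∀ x ∈ S, ∃ M : Matrix n n ℂ, (M - A).PosSemidef ∧ (B - M).PosSemidef ∧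
      (x : ℂ) ∈ spectrum ℂ M)
    (hAB : (B - A).PosSemidef)
    (htr : (B - A).trace.re < 2) : ¬ Set.Icc (0 : ℝ) 2 ⊆ S := by
  intro hsub
  have hcov : Set.Icc (0 : ℝ) 2 ⊆ ⋃ k : n, Set.Icc (hA.eigenvalues k) (hB.eigenvalues k) := by
    intro x hx
    obtain ⟨M, h1, h2, h3⟩ := hS x (hsub hx)
    have hM : M.IsHermitian := by
      have := h1.isHermitian.add hA
      simpa using this
    rw [hM.spectrum_eq_image_range] at h3
    obtain ⟨_, ⟨k, rfl⟩, hk⟩ := h3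
    have hk' : hM.eigenvalues k = x := Complex.ofReal_injective hk
    refine Set.mem_iUnion.2 ⟨k, ?_, ?_⟩
    · rw [← hk']; exact weyl_mono hA hM h1 k
    · rw [← hk']; exact weyl_mono hM hB h2 k
  have hvol := MeasureTheory.measure_mono (μ := MeasureTheory.volume) hcov
  have hvol2 := hvol.trans (MeasureTheory.measure_iUnion_fintype_le _ _)
  simp only [Real.volume_Icc] at hvol2
  rw [← ENNReal.ofReal_sum_of_nonneg
    (fun i _ => sub_nonneg.2 (weyl_mono hA hB hAB i))] at hvol2
  have htr2 : (B - A).trace.re = ∑ i, (hB.eigenvalues i - hA.eigenvalues i) := by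
    rw [Matrix.trace_sub, hA.trace_eq_sum_eigenvalues, hB.trace_eq_sum_eigenvalues]
    simp
  rw [← htr2, ENNReal.ofReal_le_ofReal_iff'] at hvol2
  rcases hvol2 with h | h <;> linarith

lemma circ_conn {V E : Type*} [Fintype V] [Fintype E] [DecidableEq V] [DecidableEq E]
    (src tgt : E → V) (hconn : (multiGraph src tgt Set.univ).Connected)
    (c : E → ℝ) (hc : ∀ v, ∑ e, c e * ((if tgt e = v then 1 else 0) - (if src e = v then 1 else 0)) = 0)
    (e₁ : E) (he : c e₁ ≠ 0) :
    (multiGraph src tgt {e | e ∉ ({e₁} : Finset E)}).Connected := by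
  classical
  set H := multiGraph src tgt {e | e ∉ ({e₁} : Finset E)} with hH
  have hstep : ∀ e, e ≠ e₁ → H.Reachable (src e) (tgt e) := by
    intro e hne
    by_cases hst : src e = tgt e
    · rw [hst]
    · apply SimpleGraph.Adj.reachable
      rw [hH, multiGraph, SimpleGraph.fromRel_adj]
      exact ⟨hst, Or.inl ⟨e, by simpa using hne, rfl, rfl⟩⟩
  have h1 : H.Reachable (src e₁) (tgt e₁) := by
    by_contra hnr
    have hsum : ∑ v ∈ Finset.univ.filter (fun v => H.Reachable (src e₁) v),
        ∑ e, c e * ((if tgt e = v then (1:ℝ) else 0) - (if src e = v then 1 else 0)) = 0 :=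
      Finset.sum_eq_zero fun v _ => hc v
    rw [Finset.sum_comm] at hsum
    rw [Finset.sum_eq_single e₁] at hsum
    · rw [← Finset.mul_sum, Finset.sum_sub_distrib] at hsum
      simp [hnr] at hsum
      exact he hsum
    · intro e _ hne
      rw [← Finset.mul_sum, Finset.sum_sub_distrib]
      have : H.Reachable (src e₁) (tgt e) ↔ H.Reachable (src e₁) (src e) :=
        ⟨fun h => h.trans (hstep e hne).symm, fun h => h.trans (hstep e hne)⟩
      simp [this]
    · simp
  have hstep' : ∀ e, H.Reachable (src e) (tgt e) := by
    intro e
    by_cases h : e = e₁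
    · rw [h]; exact h1
    · exact hstep e h
  have hadj : ∀ u v, (multiGraph src tgt Set.univ).Adj u v → H.Reachable u v := by
    intro u v huv
    rw [multiGraph, SimpleGraph.fromRel_adj] at huv
    obtain ⟨_, ⟨e, _, rfl, rfl⟩ | ⟨e, _, rfl, rfl⟩⟩ := huv
    · exact hstep' e
    · exact (hstep' e).symm
  have := hconn.nonempty
  refine SimpleGraph.Connected.mk fun u v => ?_
  obtain ⟨p⟩ := hconn.preconnected u v
  induction p with
  | nil => exact SimpleGraph.Reachable.refl _
  | cons h _ ih => exact (hadj _ _ h).trans ih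

lemma exists_circ {V E : Type*} [Fintype V] [Fintype E] [DecidableEq V] [DecidableEq E] [Nonempty V]
    (src tgt : E → V) (hbetti : Fintype.card E = Fintype.card V) :
    ∃ c : E → ℝ, c ≠ 0 ∧
      ∀ v, ∑ e, c e * ((if tgt e = v then 1 else 0) - (if src e = v then 1 else 0)) = 0 := by
  let T : (E → ℝ) →ₗ[ℝ] (V → ℝ) := LinearMap.pi fun v =>
    ∑ e, ((if tgt e = v then (1:ℝ) else 0) - (if src e = v then 1 else 0)) • LinearMap.proj e
  have hT : ∀ c v, T c v =
      ∑ e, c e * ((if tgt e = v then 1 else 0) - (if src e = v then 1 else 0)) := by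
    intro c v
    simp [T, LinearMap.sum_apply, mul_comm]
  have hns : ¬ Function.Surjective T := by
    intro hs
    obtain ⟨c, hc⟩ := hs (fun _ => 1)
    have h1 : ∑ v, T c v = 0 := by
      simp only [hT]
      rw [Finset.sum_comm]
      refine Finset.sum_eq_zero fun e _ => ?_
      rw [← Finset.mul_sum, Finset.sum_sub_distrib]
      simp
    rw [hc] at h1
    simp at h1
  have hni : ¬ Function.Injective T := fun hi => hns
    ((LinearMap.injective_iff_surjective_of_finrank_eq_finrank (by simpa using hbetti)).1 hi)
  by_contra hcon
  push Not at hcon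
  refine hni ((injective_iff_map_eq_zero T).2 fun a ha => ?_)
  by_contra h0
  obtain ⟨v, hv⟩ := hcon a h0
  exact hv (by rw [← hT, ha]; rfl)

/-- Gauge potential for all edges but `e₁`. -/
lemma exists_gauge {V E : Type*} [Fintype V] [Fintype E] [DecidableEq V] [DecidableEq E]
    (src tgt : E → V) (hbetti : Fintype.card E = Fintype.card V) (e₁ : E)
    (hconn : (multiGraph src tgt {e | e ∉ ({e₁} : Finset E)}).Connected) (α : E → ℝ) :
    ∃ φ : V → ℝ, ∀ e, e ≠ e₁ → α e = φ (tgt e) - φ (src e) := by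
  let T : (V → ℝ) →ₗ[ℝ] (E → ℝ) := LinearMap.pi fun e =>
    if e = e₁ then (LinearMap.proj (src e₁) : (V → ℝ) →ₗ[ℝ] ℝ)
    else (LinearMap.proj (tgt e) : (V → ℝ) →ₗ[ℝ] ℝ) - LinearMap.proj (src e)
  have hi : Function.Injective T := by
    refine (injective_iff_map_eq_zero T).2 fun φ hφ => ?_
    have h0 : φ (src e₁) = 0 := by simpa [T] using congrFun hφ e₁
    have hadj : ∀ u v, (multiGraph src tgt {e | e ∉ ({e₁} : Finset E)}).Adj u v → φ u = φ v := by
      intro u v huv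
      rw [multiGraph, SimpleGraph.fromRel_adj] at huv
      have key : ∀ e, e ∈ {e | e ∉ ({e₁} : Finset E)} → φ (tgt e) = φ (src e) := by
        intro e he
        have he' : e ≠ e₁ := by simpa using he
        have := congrFun hφ e
        simp [T, he'] at this
        linarith
      obtain ⟨_, ⟨e, he, rfl, rfl⟩ | ⟨e, he, rfl, rfl⟩⟩ := huv
      · exact (key e he).symm
      · exact key e he
    funext v
    obtain ⟨p⟩ := hconn.preconnected v (src e₁)
    have : ∀ u w, (multiGraph src tgt {e | e ∉ ({e₁} : Finset E)}).Walk u w → φ u = φ w := by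
      intro u w p
      induction p with
      | nil => rfl
      | cons h _ ih => exact (hadj _ _ h).trans ih
    rw [this _ _ p, h0]; rfl
  obtain ⟨φ, hφ⟩ := ((LinearMap.injective_iff_surjective_of_finrank_eq_finrank
    (by simpa using hbetti.symm)).1 hi) α
  refine ⟨φ, fun e he => ?_⟩
  rw [← hφ]; simp [T, he]

/-- Degree counted within the support of `c`. -/
def sdeg {V E : Type*} [Fintype E] [DecidableEq V] (src tgt : E → V) (s : E → Prop)
    [DecidablePred s] (v : V) : ℕ :=
  ∑ e : E, if s e then ((if src e = v then 1 else 0) + (if tgt e = v then 1 else 0)) else 0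

lemma sdeg_ge {V E : Type*} [Fintype E] [DecidableEq V] [DecidableEq E] (src tgt : E → V)
    (c : E → ℝ) [DecidablePred fun e => c e ≠ 0]
    (hc : ∀ v, ∑ e, c e * ((if tgt e = v then 1 else 0) - (if src e = v then 1 else 0)) = 0)
    (e : E) (he : c e ≠ 0) (v : V) (hv : src e = v ∨ tgt e = v) :
    2 ≤ sdeg src tgt (fun e => c e ≠ 0) v := by
  unfold sdeg
  by_cases hl : src e = v ∧ tgt e = v
  · refine le_trans ?_ (Finset.single_le_sum (fun _ _ => Nat.zero_le _) (Finset.mem_univ e))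
    simp [he, hl.1, hl.2]
  · obtain ⟨e', hne, he', hv'⟩ : ∃ e', e' ≠ e ∧ c e' ≠ 0 ∧ (src e' = v ∨ tgt e' = v) := by
      by_contra hcon
      push Not at hcon
      have := hc v
      rw [Finset.sum_eq_single e] at this
      · rcases hv with h | h
        · have h2 : tgt e ≠ v := fun h2 => hl ⟨h, h2⟩
          simp [h, h2, he] at this
        · have h2 : src e ≠ v := fun h2 => hl ⟨h2, h⟩
          simp [h, h2, he] at this
      · intro b _ hb
        by_cases hcb : c b = 0
        · simp [hcb]
        · have := hcon b hb hcb
          simp [this.1, this.2]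
      · simp
    have hsub : ({e, e'} : Finset E) ⊆ Finset.univ := Finset.subset_univ _
    refine le_trans ?_ (Finset.sum_le_sum_of_subset hsub)
    rw [Finset.sum_pair hne.symm]
    simp only [he, he', ne_eq, not_false_eq_true, if_true]
    have a1 : 1 ≤ (if src e = v then 1 else 0) + (if tgt e = v then 1 else 0) := by
      rcases hv with h | h <;> simp [h]
    have a2 : 1 ≤ (if src e' = v then 1 else 0) + (if tgt e' = v then 1 else 0) := by
      rcases hv' with h | h <;> simp [h]
    omega

lemma exists_centre {V E : Type*} [Fintype V] [Fintype E] [DecidableEq V] [DecidableEq E]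
    (src tgt : E → V) (hconn : (multiGraph src tgt Set.univ).Connected)
    (hdeg1 : ∃ v, mdeg src tgt v = 1)
    (c : E → ℝ) (hc0 : c ≠ 0)
    (hc : ∀ v, ∑ e, c e * ((if tgt e = v then 1 else 0) - (if src e = v then 1 else 0)) = 0) :
    (∀ e, c e ≠ 0 → 2 ≤ mdeg src tgt (src e) ∧ 2 ≤ mdeg src tgt (tgt e)) ∧
    ∃ e, c e ≠ 0 ∧ (3 ≤ mdeg src tgt (src e) ∨ 3 ≤ mdeg src tgt (tgt e)) := by
  classical
  have hle : ∀ v, sdeg src tgt (fun e => c e ≠ 0) v ≤ mdeg src tgt v := by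
    intro v
    refine Finset.sum_le_sum fun e _ => ?_
    split_ifs <;> simp
  have h2 : ∀ e, c e ≠ 0 → ∀ v, (src e = v ∨ tgt e = v) → 2 ≤ mdeg src tgt v :=
    fun e he v hv => (sdeg_ge src tgt c hc e he v hv).trans (hle v)
  refine ⟨fun e he => ⟨h2 e he _ (Or.inl rfl), h2 e he _ (Or.inr rfl)⟩, ?_⟩
  by_contra hcon
  push Not at hcon
  let S : Set V := {v | ∃ e, c e ≠ 0 ∧ (src e = v ∨ tgt e = v)}
  have hsupp : ∀ v ∈ S, ∀ e, (src e = v ∨ tgt e = v) → c e ≠ 0 := by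
    rintro v ⟨e, he, hv⟩ e' hv' h0
    have hs := sdeg_ge src tgt c hc e he v hv
    have hm : mdeg src tgt v < 3 := by
      rcases hv with h | h
      · rw [← h]; exact (hcon e he).1
      · rw [← h]; exact (hcon e he).2
    have : sdeg src tgt (fun e => c e ≠ 0) v < mdeg src tgt v := by
      refine Finset.sum_lt_sum (fun e _ => ?_) ⟨e', Finset.mem_univ _, ?_⟩
      · split_ifs <;> simp
      · simp only [h0, ne_eq, not_true_eq_false, if_false]
        rcases hv' with h | h <;> simp [h]
    omega
  have hadj : ∀ u v, (multiGraph src tgt Set.univ).Adj u v → u ∈ S → v ∈ S := by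
    intro u v huv hu
    rw [multiGraph, SimpleGraph.fromRel_adj] at huv
    obtain ⟨_, ⟨e, _, rfl, rfl⟩ | ⟨e, _, rfl, rfl⟩⟩ := huv
    · exact ⟨e, hsupp _ hu e (Or.inl rfl), Or.inr rfl⟩
    · exact ⟨e, hsupp _ hu e (Or.inr rfl), Or.inl rfl⟩
  have hwalk : ∀ u w, (multiGraph src tgt Set.univ).Walk u w → u ∈ S → w ∈ S := by
    intro u w p
    induction p with
    | nil => exact id
    | cons h _ ih => exact fun hu => ih (hadj _ _ h hu)
  obtain ⟨e, he⟩ := Function.ne_iff.1 hc0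
  obtain ⟨v, hv⟩ := hdeg1
  obtain ⟨p⟩ := hconn.preconnected (src e) v
  obtain ⟨e', he', hv'⟩ := hwalk _ _ p ⟨e, he, Or.inl rfl⟩
  have := h2 e' he' v hv'
  omega

lemma dml_gauge {V E : Type*} [Fintype V] [Fintype E] [DecidableEq V] (src tgt : E → V)
    (m : V → ℝ) (mE : E → ℝ) (α : E → ℝ) (φ : V → ℝ) :
    spectrum ℂ (dml src tgt m mE α) =
      spectrum ℂ (dml src tgt m mE (fun e => α e - (φ (tgt e) - φ (src e)))) := by
  let f : V → ℂ := fun v => Complex.exp ((φ v : ℂ) * Complex.I)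
  let g : V → ℂ := fun v => Complex.exp (-((φ v : ℂ) * Complex.I))
  have hfg : ∀ v, f v * g v = 1 := fun v => by simp [f, g, ← Complex.exp_add]
  have hgf : ∀ v, g v * f v = 1 := fun v => by rw [mul_comm, hfg]
  let U : (Matrix V V ℂ)ˣ := ⟨Matrix.diagonal f, Matrix.diagonal g,
    by rw [Matrix.diagonal_mul_diagonal]; simp [hfg],
    by rw [Matrix.diagonal_mul_diagonal]; simp [hgf]⟩
  rw [← spectrum.units_conjugate (u := U)
    (a := dml src tgt m mE (fun e => α e - (φ (tgt e) - φ (src e))))]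
  congr 1
  ext u v
  change _ = (Matrix.diagonal f *
    dml src tgt m mE (fun e => α e - (φ (tgt e) - φ (src e))) * Matrix.diagonal g) u v
  rw [Matrix.mul_diagonal, Matrix.diagonal_mul]
  unfold dml dmlPhase
  rw [mul_sub, sub_mul]
  congr 1
  · split_ifs with h
    · subst h
      rw [mul_right_comm, hfg, one_mul]
    · simp
  · rw [mul_left_comm, mul_assoc]
    congr 1
    rw [Finset.mul_sum, Finset.sum_mul]
    refine Finset.sum_congr rfl fun e _ => ?_
    rw [mul_left_comm, mul_assoc]
    congr 1
    rw [mul_add, add_mul]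
    congr 1
    · split_ifs with h
      · obtain ⟨rfl, rfl⟩ := h
        simp only [f, g, ← Complex.exp_add]
        congr 1
        push_cast
        ring
      · simp
    · split_ifs with h
      · obtain ⟨rfl, rfl⟩ := h
        simp only [f, g, ← Complex.exp_add, ← Complex.exp_conj]
        congr 1
        simp
        ring
      · simp

/-- Diagonal bracket matrix of the edge `e₁`. -/
noncomputable def brD {V E : Type*} [DecidableEq V] (src tgt : E → V)
    (m : V → ℝ) (e₁ : E) : Matrix V V ℂ :=
  Matrix.diagonal fun u => (((1 / m u) *
    ((if src e₁ = u then 1 else 0) + (if tgt e₁ = u then 1 else 0)) : ℝ) : ℂ)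

/-- Off-diagonal contribution of the edge `e₁`. -/
noncomputable def brB {V E : Type*} [DecidableEq V] (src tgt : E → V)
    (m : V → ℝ) (e₁ : E) (z : ℂ) : Matrix V V ℂ := fun u v =>
  ((1 / (Real.sqrt (m u) * Real.sqrt (m v)) : ℝ) : ℂ) *
    ((if src e₁ = v ∧ tgt e₁ = u then z else 0) +
      (if tgt e₁ = v ∧ src e₁ = u then starRingEnd ℂ z else 0))

lemma br_psd {V E : Type*} [Fintype V] [DecidableEq V] (src tgt : E → V)
    (m : V → ℝ) (hm : ∀ v, 0 ≤ m v) (e₁ : E) (z : ℂ) (hz : z * starRingEnd ℂ z = 1) :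
    (brD src tgt m e₁ - brB src tgt m e₁ z).PosSemidef := by
  let w : V → ℂ := fun u => ((1 / Real.sqrt (m u) : ℝ) : ℂ) *
    ((if src e₁ = u then 1 else 0) - (if tgt e₁ = u then z else 0))
  have : brD src tgt m e₁ - brB src tgt m e₁ z = Matrix.vecMulVec w (star w) := by
    ext u v
    rw [Matrix.vecMulVec_apply, Matrix.sub_apply, brD, brB]
    by_cases huv : u = v
    · subst huv
      have hs : Real.sqrt (m u) * Real.sqrt (m u) = m u := Real.mul_self_sqrt (hm u)
      have hs' : ((1 / m u : ℝ) : ℂ) =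
          ((1 / Real.sqrt (m u) : ℝ) : ℂ) * ((1 / Real.sqrt (m u) : ℝ) : ℂ) := by
        rw [← Complex.ofReal_mul, div_mul_div_comm, hs, one_mul]
      rw [Matrix.diagonal_apply_eq, hs, Complex.ofReal_mul, hs', ← mul_sub]
      simp only [w, Pi.star_apply, star_mul', Complex.star_def, Complex.conj_ofReal]
      rw [mul_mul_mul_comm]
      congr 1
      by_cases h1 : src e₁ = u <;> by_cases h2 : tgt e₁ = u <;> simp [h1, h2, hz] <;>
        linear_combination -hz
    · rw [Matrix.diagonal_apply_ne _ huv]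
      have hs' : ((1 / (Real.sqrt (m u) * Real.sqrt (m v)) : ℝ) : ℂ) =
          ((1 / Real.sqrt (m u) : ℝ) : ℂ) * ((1 / Real.sqrt (m v) : ℝ) : ℂ) := by
        rw [← Complex.ofReal_mul, div_mul_div_comm, one_mul]
      rw [hs']
      simp only [w, Pi.star_apply, star_mul', Complex.star_def, Complex.conj_ofReal]
      rw [mul_mul_mul_comm, zero_sub, ← mul_neg]
      congr 1
      by_cases h1 : src e₁ = u <;> by_cases h2 : tgt e₁ = u <;>
        by_cases h3 : src e₁ = v <;> by_cases h4 : tgt e₁ = v <;>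
        first
        | exact absurd (h1.symm.trans h3) huv
        | exact absurd (h2.symm.trans h4) huv
        | simp [h1, h2, h3, h4, huv, Ne.symm huv]
  rw [this]
  exact Matrix.posSemidef_vecMulVec_self_star w

lemma dmlPhase_herm {V E : Type*} [Fintype E] [DecidableEq V] (src tgt : E → V)
    (m : V → ℝ) (mE : E → ℝ) (z : E → ℂ) : (dmlPhase src tgt m mE z).IsHermitian := by
  ext u v
  rw [Matrix.conjTranspose_apply]
  unfold dmlPhase
  rw [star_sub, star_mul']
  congr 1
  · by_cases h : u = v
    · subst h; simp
    · simp [h, Ne.symm h]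
  · congr 1
    · simp [mul_comm]
    · rw [star_sum]
      refine Finset.sum_congr rfl fun e _ => ?_
      rw [star_mul', star_add, add_comm]
      congr 1
      · simp
      · congr 1
        · rw [apply_ite star]; simp [and_comm]
        · rw [apply_ite star]; simp [and_comm]

lemma brD_herm {V E : Type*} [DecidableEq V] (src tgt : E → V)
    (m : V → ℝ) (e₁ : E) : (brD src tgt m e₁).IsHermitian := by
  refine Matrix.isHermitian_diagonal_of_self_adjoint _ ?_
  ext u
  simp

lemma brD_trace {V E : Type*} [Fintype V] [DecidableEq V] (src tgt : E → V)
    (m : V → ℝ) (e₁ : E) :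
    (brD src tgt m e₁).trace.re = 1 / m (src e₁) + 1 / m (tgt e₁) := by
  rw [brD, Matrix.trace_diagonal, ← Complex.ofReal_sum, Complex.ofReal_re]
  simp [mul_add, Finset.sum_add_distrib]

lemma dmlPhase_split {V E : Type*} [Fintype E] [DecidableEq V] [DecidableEq E] (src tgt : E → V)
    (m : V → ℝ) (e₁ : E) (z : E → ℂ) (hz : ∀ e, e ≠ e₁ → z e = 1) :
    dmlPhase src tgt m (fun _ => 1) z =
      dmlPhase src tgt m (fun _ => 1) (fun e => if e = e₁ then 0 else 1)
        - brB src tgt m e₁ (z e₁) := by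
  ext u v
  rw [Matrix.sub_apply, brB]
  unfold dmlPhase
  rw [sub_sub, ← mul_add]
  congr 2
  rw [← Finset.add_sum_erase _ _ (Finset.mem_univ e₁),
    ← Finset.add_sum_erase (a := e₁) Finset.univ (fun e => _ * (_ + _)) (Finset.mem_univ e₁)]
  rw [Finset.sum_congr rfl (g := fun e => ((1 : ℝ) : ℂ) *
          ((if src e = v ∧ tgt e = u then (if e = e₁ then 0 else 1) else 0) +
           (if tgt e = v ∧ src e = u then starRingEnd ℂ (if e = e₁ then 0 else 1) else 0)))]
  · simp only [if_true]
    simp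
    ring
  · intro e he
    have hne := Finset.ne_of_mem_erase he
    simp [hne, hz e hne]

lemma ms_nonempty {V E : Type*} [Fintype V] [Fintype E] [DecidableEq V] [DecidableEq E]
    [Nonempty V] (src tgt : E → V) (hbetti : Fintype.card E = Fintype.card V) (e₁ : E)
    (hconn : (multiGraph src tgt {e | e ∉ ({e₁} : Finset E)}).Connected)
    (hpos : 0 < mdeg src tgt (src e₁))
    (hδ : 1 / (mdeg src tgt (src e₁) : ℝ) + 1 / (mdeg src tgt (tgt e₁) : ℝ) < 1) :
    msSet src tgt (fun v => (mdeg src tgt v : ℝ)) (fun _ => 1) ≠ ∅ := by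
  set m : V → ℝ := fun v => (mdeg src tgt v : ℝ) with hm
  have hm0 : ∀ v, 0 ≤ m v := fun v => Nat.cast_nonneg _
  intro hempty
  rw [msSet, Set.sdiff_eq_empty] at hempty
  have hrho : rho src tgt m (fun _ => 1) (src e₁) = 1 := by
    have : edgeSumAt src tgt (fun _ => 1) (src e₁) = m (src e₁) := by
      simp [edgeSumAt, hm, mdeg]
    rw [rho, this]
    exact div_self (by simp only [hm]; positivity)
  have hsup : 1 ≤ Finset.univ.sup' Finset.univ_nonempty (rho src tgt m (fun _ => 1)) := by
    refine hrho.symm.le.trans ?_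
    exact Finset.le_sup' (rho src tgt m (fun _ => 1)) (Finset.mem_univ (src e₁))
  set P := dmlPhase src tgt m (fun _ => 1) (fun e => if e = e₁ then 0 else 1) with hP
  set D := brD src tgt m e₁ with hD
  have hPh : P.IsHermitian := dmlPhase_herm _ _ _ _ _
  have hDh : D.IsHermitian := brD_herm _ _ _ _
  have e1 : (P + D) - (P - D) = D + D := by abel
  have hDpsd : D.PosSemidef := by
    refine Matrix.PosSemidef.diagonal ?_
    intro u
    rw [Pi.zero_apply, Complex.zero_le_real]
    have := hm0 u
    positivity
  refine bracket (A := P - D) (B := P + D) (hPh.sub hDh) (hPh.add hDh) _ ?_ ?_ ?_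
    ((Set.Icc_subset_Icc_right (by linarith)).trans hempty)
  · intro x hx
    obtain ⟨α, hα⟩ := Set.mem_iUnion.1 hx
    obtain ⟨φ, hφ⟩ := exists_gauge src tgt hbetti e₁ hconn α
    change (x : ℂ) ∈ spectrum ℂ _ at hα
    rw [dml_gauge src tgt m _ α φ] at hα
    refine ⟨_, ?_, ?_, hα⟩
    all_goals
      unfold dml
      rw [dmlPhase_split src tgt m e₁ _ (fun e he => by
        simp [hφ e he])]
    · rw [show ∀ B : Matrix V V ℂ, P - B - (P - D) = D - B by intro B; abel]
      apply br_psd _ _ _ hm0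
      rw [← Complex.exp_conj, ← Complex.exp_add]
      simp
    · have hneg : ∀ z, brB src tgt m e₁ z = - brB src tgt m e₁ (-z) := by
        intro z
        ext u v
        rw [Matrix.neg_apply, brB, brB, ← mul_neg]
        congr 1
        split_ifs <;> simp <;> ring
      rw [hneg, show ∀ B : Matrix V V ℂ, P + D - (P - -B) = D - B by intro B; abel]
      apply br_psd _ _ _ hm0
      rw [map_neg, neg_mul_neg, ← Complex.exp_conj, ← Complex.exp_add]
      simp
  · rw [e1]; exact hDpsd.add hDpsd
  · rw [e1, Matrix.trace_add, Complex.add_re, brD_trace]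
    simp only [hm]
    linarith


end

/-- A finite connected weighted graph with standard weights
(`m(v) = deg v`, `m_e = 1`), Betti number 1 (`|E| = |V|`) and a vertex of degree 1
has a centre vertex `v₀` with a single cycle edge `e₁` such that
`1 − 1/deg((v₀)_{e₁}) − 1/deg(v₀) ≥ 1/6 > 0`; consequently the magnetic spectral
gaps set is nonempty. -/
theorem stmt9 {V E : Type*} [Fintype V] [Fintype E] [DecidableEq V] [DecidableEq E]
    [Nonempty V] (src tgt : E → V)
    (hconn : (multiGraph src tgt Set.univ).Connected)
    (hbetti : Fintype.card E = Fintype.card V)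
    (hdeg1 : ∃ v, mdeg src tgt v = 1) :
    ∃ (v₀ : V) (e₁ : E), (src e₁ = v₀ ∨ tgt e₁ = v₀) ∧
      isTreeAfter src tgt {e₁} ∧
      (1 / 6 : ℝ) ≤
        1 - 1 / (mdeg src tgt (if src e₁ = v₀ then tgt e₁ else src e₁) : ℝ)
          - 1 / (mdeg src tgt v₀ : ℝ) ∧
      msSet src tgt (fun v => (mdeg src tgt v : ℝ)) (fun _ => 1) ≠ ∅ := by
  obtain ⟨c, hc0, hc⟩ := exists_circ src tgt hbetti
  obtain ⟨h2, e, he, h3⟩ := exists_centre src tgt hconn hdeg1 c hc0 hc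
  have hT := circ_conn src tgt hconn c hc e he
  have htree : isTreeAfter src tgt {e} := by
    refine ⟨hT, ?_⟩
    rw [← hbetti, Finset.filter_not, Finset.card_sdiff]
    simp [Finset.filter_eq']
  have ineq : ∀ a b : ℕ, 2 ≤ a → 3 ≤ b → 1 / (a : ℝ) ≤ 1 / 2 ∧ 1 / (b : ℝ) ≤ 1 / 3 := by
    intro a b ha hb
    have ha' : (2 : ℝ) ≤ a := by exact_mod_cast ha
    have hb' : (3 : ℝ) ≤ b := by exact_mod_cast hb
    exact ⟨one_div_le_one_div_of_le (by norm_num) ha', one_div_le_one_div_of_le (by norm_num) hb'⟩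
  obtain ⟨hs, ht⟩ := h2 e he
  rcases h3 with h3 | h3
  · obtain ⟨i1, i2⟩ := ineq _ _ ht h3
    refine ⟨src e, e, Or.inl rfl, htree, ?_, ms_nonempty src tgt hbetti e hT (by omega) ?_⟩
    · rw [if_pos rfl]; linarith
    · linarith
  · obtain ⟨i1, i2⟩ := ineq _ _ hs h3
    refine ⟨tgt e, e, Or.inr rfl, htree, ?_, ms_nonempty src tgt hbetti e hT (by omega) ?_⟩
    · split_ifs with h
      · rw [h] at i1; linarith
      · linarith
    · linarith
end
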